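/- Let λ_H, λ_L, λ_2 > 0, EB_H, EB_L, EB_2 > 0, second moments EB_H2, EB_L2, EB_22 ≥ 0, ES_1 > 0, EC > 0, EC2 ≥ 0, ρ_H = λ_H·EB_H, ρ_L = λ_L·EB_L, ρ_2 = λ_2·EB_2 with ρ_2 < 1. Let β_H, β_L, β_2, γ, σ_1 : ℝ → ℝ satisfy the second-order expansions (β_i(ω) − (1 − EB_i·ω + EB_i2·ω²/2))/ω² → 0 for i ∈ {H, L, 2} and (γ(ω) − (1 − EC·ω + EC2·ω²/2))/ω² → 0 as ω → 0⁺, and the first-order expansion (σ_1(ω) − (1 − ES_1·ω))/ω → 0 as ω → 0⁺. Then (1/ω)·(1 − σ_1(ω)·(γ(λ_H(1−β_H(ω)) + λ_L(1−β_L(ω)) + λ_2(1−β_2(ω))) − γ(ω + λ_H(1−β_H(ω)) + λ_L(1−β_L(ω)))) / ((ω − λ_2(1 − β_2(ω)))·EC)) → ES_1 + (1 + 2ρ_H + 2ρ_L + ρ_2)·EC2/(2·EC) as ω → 0⁺. -/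

import Mathlib

/-!
Write `a = ∑_{i=H,L,2} λ_i(1 - β_i(ω))`, `b = ω + ∑_{i=H,L} λ_i(1 - β_i(ω))` and let `r` be the
remainder `(γ(x) - (1 - EC x + EC2 x²/2)) / x²`. The denominator of the transform is `(b - a) EC`,
so the leading term of `γ(a) - γ(b)` cancels it and
`(γ(a) - γ(b)) / ((b - a) EC) = 1 - EC2/(2 EC) (a + b) + (r(a) a² - r(b) b²) / ((b - a) EC)`.
Every quantity is now controlled by the ratios `a/ω → ρ_H + ρ_L + ρ_2` and `b/ω → 1 + ρ_H + ρ_L`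
(`tendsto_one_sub_div`): their sum is the coefficient in the limit, their difference `1 - ρ_2` is
nonzero, and both being positive forces `a, b → 0⁺`, hence `r(a), r(b) → 0`
(`tendsto_nhdsGT_of_div`).
-/

open Filter

lemma tendsto_one_sub_div {m m2 : ℝ} {β : ℝ → ℝ}
    (h : Tendsto (fun ω => (β ω - (1 - m * ω + m2 * ω ^ 2 / 2)) / ω ^ 2)
      (nhdsWithin 0 (Set.Ioi 0)) (nhds 0)) :
    Tendsto (fun ω => (1 - β ω) / ω) (nhdsWithin 0 (Set.Ioi 0)) (nhds m) := by
  have hid : Tendsto (fun ω : ℝ => ω) (nhdsWithin 0 (Set.Ioi 0)) (nhds 0) :=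
    tendsto_id.mono_left nhdsWithin_le_nhds
  have h1 := (tendsto_const_nhds (x := m)).sub (hid.mul (h.add_const (m2 / 2)))
  rw [zero_mul, sub_zero] at h1
  refine h1.congr' ?_
  filter_upwards [self_mem_nhdsWithin] with ω hω
  have hω' : ω ≠ 0 := ne_of_gt hω
  field_simp
  ring

lemma tendsto_nhdsGT_of_div {a : ℝ → ℝ} {c : ℝ} (hc : 0 < c)
    (h : Tendsto (fun ω => a ω / ω) (nhdsWithin 0 (Set.Ioi 0)) (nhds c)) :
    Tendsto a (nhdsWithin 0 (Set.Ioi 0)) (nhdsWithin 0 (Set.Ioi 0)) := by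
  have hid : Tendsto (fun ω : ℝ => ω) (nhdsWithin 0 (Set.Ioi 0)) (nhds 0) :=
    tendsto_id.mono_left nhdsWithin_le_nhds
  refine tendsto_nhdsWithin_iff.2 ⟨?_, ?_⟩
  · have h1 := h.mul hid
    rw [mul_zero] at h1
    refine h1.congr' ?_
    filter_upwards [self_mem_nhdsWithin] with ω hω
    exact div_mul_cancel₀ _ (ne_of_gt hω)
  · filter_upwards [self_mem_nhdsWithin, h.eventually (lt_mem_nhds hc)] with ω hω h2
    exact (div_pos_iff_of_pos_right hω).1 h2

/-- Mean waiting time of a type-2 customer under globally gated service: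
`E(W_2) = E(S_1) + (1 + 2ρ_H + 2ρ_L + ρ_2)·E(C²)/(2E(C))`. -/
theorem stmt_16 (lH lL l2 EBH EBL EB2 EBH2 EBL2 EB22 ES1 EC EC2 ρH ρL ρ2 : ℝ)
    (hlH : 0 < lH) (hlL : 0 < lL) (hl2 : 0 < l2)
    (hEBH : 0 < EBH) (hEBL : 0 < EBL) (hEB2 : 0 < EB2)
    (hEBH2 : 0 ≤ EBH2) (hEBL2 : 0 ≤ EBL2) (hEB22 : 0 ≤ EB22)
    (hES1 : 0 < ES1) (hEC : 0 < EC) (hEC2 : 0 ≤ EC2)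
    (hρH : ρH = lH * EBH) (hρL : ρL = lL * EBL) (hρ2 : ρ2 = l2 * EB2)
    (hρ2lt : ρ2 < 1)
    (βH βL β2 γ σ1 : ℝ → ℝ)
    (hβH : Tendsto (fun ω => (βH ω - (1 - EBH * ω + EBH2 * ω ^ 2 / 2)) / ω ^ 2)
      (nhdsWithin 0 (Set.Ioi 0)) (nhds 0))
    (hβL : Tendsto (fun ω => (βL ω - (1 - EBL * ω + EBL2 * ω ^ 2 / 2)) / ω ^ 2)
      (nhdsWithin 0 (Set.Ioi 0)) (nhds 0))
    (hβ2 : Tendsto (fun ω => (β2 ω - (1 - EB2 * ω + EB22 * ω ^ 2 / 2)) / ω ^ 2)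
      (nhdsWithin 0 (Set.Ioi 0)) (nhds 0))
    (hγ : Tendsto (fun ω => (γ ω - (1 - EC * ω + EC2 * ω ^ 2 / 2)) / ω ^ 2)
      (nhdsWithin 0 (Set.Ioi 0)) (nhds 0))
    (hσ1 : Tendsto (fun ω => (σ1 ω - (1 - ES1 * ω)) / ω)
      (nhdsWithin 0 (Set.Ioi 0)) (nhds 0)) :
    Tendsto (fun ω => (1 / ω) * (1 - σ1 ω *
        (γ (lH * (1 - βH ω) + lL * (1 - βL ω) + l2 * (1 - β2 ω))
            - γ (ω + lH * (1 - βH ω) + lL * (1 - βL ω)))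
          / ((ω - l2 * (1 - β2 ω)) * EC)))
      (nhdsWithin 0 (Set.Ioi 0))
      (nhds (ES1 + (1 + 2 * ρH + 2 * ρL + ρ2) * EC2 / (2 * EC))) := by
  subst hρH hρL hρ2
  have hid : Tendsto (fun ω : ℝ => ω) (nhdsWithin 0 (Set.Ioi 0)) (nhds 0) :=
    tendsto_id.mono_left nhdsWithin_le_nhds
  have uH := (tendsto_one_sub_div hβH).const_mul lH
  have uL := (tendsto_one_sub_div hβL).const_mul lL
  have u2 := (tendsto_one_sub_div hβ2).const_mul l2
  set a : ℝ → ℝ := fun ω => lH * (1 - βH ω) + lL * (1 - βL ω) + l2 * (1 - β2 ω) with ha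
  set b : ℝ → ℝ := fun ω => ω + lH * (1 - βH ω) + lL * (1 - βL ω) with hb
  set r : ℝ → ℝ := fun x => (γ x - (1 - EC * x + EC2 * x ^ 2 / 2)) / x ^ 2 with hr
  have ta : Tendsto (fun ω => a ω / ω) (nhdsWithin 0 (Set.Ioi 0))
      (nhds (lH * EBH + lL * EBL + l2 * EB2)) := by
    refine ((uH.add uL).add u2).congr fun ω => ?_
    simp only [ha]
    ring
  have tb : Tendsto (fun ω => b ω / ω) (nhdsWithin 0 (Set.Ioi 0))
      (nhds (1 + lH * EBH + lL * EBL)) := by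
    refine ((uH.const_add 1).add uL).congr' ?_
    filter_upwards [self_mem_nhdsWithin] with ω hω
    have hω' : ω ≠ 0 := ne_of_gt hω
    simp only [hb]
    field_simp
  have a0 := tendsto_nhdsGT_of_div (by positivity) ta
  have b0 := tendsto_nhdsGT_of_div (by positivity) tb
  have ra : Tendsto (fun ω => r (a ω)) (nhdsWithin 0 (Set.Ioi 0)) (nhds 0) := hγ.comp a0
  have rb : Tendsto (fun ω => r (b ω)) (nhdsWithin 0 (Set.Ioi 0)) (nhds 0) := hγ.comp b0
  have tD := tb.sub ta
  have hD : 0 < 1 + lH * EBH + lL * EBL - (lH * EBH + lL * EBL + l2 * EB2) := by linarith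
  have tσ : Tendsto σ1 (nhdsWithin 0 (Set.Ioi 0)) (nhds 1) := by
    have h1 := ((hσ1.sub_const ES1).mul hid).const_add 1
    rw [mul_zero, add_zero] at h1
    refine h1.congr' ?_
    filter_upwards [self_mem_nhdsWithin] with ω hω
    have hω' : ω ≠ 0 := ne_of_gt hω
    field_simp
    ring
  have rem := (((ra.mul (ta.pow 2)).sub (rb.mul (tb.pow 2))).div (tD.mul_const EC)
    (ne_of_gt (mul_pos hD hEC)))
  -- `(1 - σ Q)/ω = (1 - σ)/ω + σ (1 - Q)/ω`, where `Q` is the ratio `(γ(a) - γ(b)) / ((b - a) EC)`.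
  have main := (hσ1.const_sub ES1).add
    (tσ.mul (((ta.add tb).const_mul (EC2 / (2 * EC))).sub rem))
  have hlim : ES1 - 0 + 1 * (EC2 / (2 * EC) * (lH * EBH + lL * EBL + l2 * EB2
        + (1 + lH * EBH + lL * EBL))
      - (0 * (lH * EBH + lL * EBL + l2 * EB2) ^ 2 - 0 * (1 + lH * EBH + lL * EBL) ^ 2)
        / ((1 + lH * EBH + lL * EBL - (lH * EBH + lL * EBL + l2 * EB2)) * EC))
      = ES1 + (1 + 2 * (lH * EBH) + 2 * (lL * EBL) + l2 * EB2) * EC2 / (2 * EC) := by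
    simp only [zero_mul, sub_zero, zero_div]
    ring
  rw [hlim] at main
  refine main.congr' ?_
  filter_upwards [self_mem_nhdsWithin, a0.eventually self_mem_nhdsWithin,
    b0.eventually self_mem_nhdsWithin, tD.eventually (lt_mem_nhds hD)] with ω hω haω hbω hDω
  have hω' : ω ≠ 0 := ne_of_gt hω
  have hab : b ω - a ω ≠ 0 := by
    rw [← sub_div] at hDω
    exact ((div_pos_iff_of_pos_right hω).1 hDω).ne'
  have hden : ω - l2 * (1 - β2 ω) = b ω - a ω := by
    simp only [ha, hb]
    ring
  have ga : γ (a ω) = 1 - EC * a ω + EC2 * a ω ^ 2 / 2 + r (a ω) * a ω ^ 2 := by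
    have : a ω ≠ 0 := ne_of_gt haω
    simp only [hr]
    field_simp
    ring
  have gb : γ (b ω) = 1 - EC * b ω + EC2 * b ω ^ 2 / 2 + r (b ω) * b ω ^ 2 := by
    have : b ω ≠ 0 := ne_of_gt hbω
    simp only [hr]
    field_simp
    ring
  change _ = 1 / ω * (1 - σ1 ω * (γ (a ω) - γ (b ω)) / ((ω - l2 * (1 - β2 ω)) * EC))
  rw [hden, ga, gb, Pi.div_apply, ← sub_div]
  field_simp
  ring
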